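/- arXiv:2110.00237 — 2 statements merged into one kernel-verified Lean document; each statement's English description precedes it below -/
import Mathlib

section
/- Let a, b, c, d be nonnegative integers with a > 0, c > 0, and ad ≠ bc, and let s be a real number with 0 ≤ s ≤ 1. Then liminf_{n→∞} σ_s(an+b) / σ_s(cn+d) = 0 and limsup_{n→∞} σ_s(an+b) / σ_s(cn+d) = ∞. -/
/-!
Both claims follow from the lower bound `exists_large_ratio`: for every `M` there are arbitrarily
large `n` with `M σ_s(cn+d) ≤ σ_s(an+b)`. The limsup claim is this bound as it stands, and the
liminf claim is the same bound with the two linear forms exchanged.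

For the bound, let `A = a c |ad - bc|` and let `Q = ∏_{j<J} (1 + jA)`, which is coprime to `A` and
whose divisors `1 + jA` have an arbitrarily large sum of reciprocals. Pick `r` with
`Q ∣ ar + b`. A common prime factor of `Q` and `cr + d` would divide `ad - bc`, so
`(cr + d)/g`, with `g = gcd(c, d)`, is coprime to `(c/g) Q`. Dirichlet's theorem yields
infinitely many `n ≡ r (mod Q)` with `cn + d = g p`, `p` prime. For these,
`σ_s(cn+d) ≤ 2 τ(g) (cn+d)^s`, whereas `s ≤ 1` and `Q ∣ an + b` give
`σ_s(an+b) ≥ (an+b)^s ∑_{j<J} 1/(1+jA)`.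
-/

open Filter Topology

/-- `σ_s(n) = ∑_{d ∣ n} d^s` over the positive divisors of `n`. -/
noncomputable def sigmaR (s : ℝ) (n : ℕ) : ℝ := ∑ d ∈ n.divisors, (d : ℝ) ^ s

lemma sigmaR_pos (s : ℝ) {n : ℕ} (hn : 0 < n) : 0 < sigmaR s n := by
  refine Finset.sum_pos (fun e he => ?_) ⟨1, by simp; omega⟩
  have := Nat.pos_of_mem_divisors he
  positivity

/-- With `τ(gp) ≤ τ(g) τ(p) = 2 τ(g)`, every divisor of `gp` contributes at most `(gp)^s`. -/
lemma sigmaR_mul_prime_le {s : ℝ} (hs0 : 0 ≤ s) (g p : ℕ) (hp : p.Prime) :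
    sigmaR s (g * p) ≤ 2 * (g.divisors.card : ℝ) * ((g * p : ℕ) : ℝ) ^ s := by
  open scoped Pointwise in
  have hcard : (g * p).divisors.card ≤ g.divisors.card * 2 := by
    rw [Nat.divisors_mul]
    refine Finset.card_mul_le.trans ?_
    rw [hp.divisors, Finset.card_pair hp.one_lt.ne]
  have h1 : sigmaR s (g * p) ≤ (g * p).divisors.card • ((g * p : ℕ) : ℝ) ^ s := by
    refine Finset.sum_le_card_nsmul _ _ _ fun e he => ?_
    exact Real.rpow_le_rpow (by positivity) (by exact_mod_cast Nat.divisor_le he) hs0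
  refine h1.trans ?_
  rw [nsmul_eq_mul]
  have h2 : ((g * p).divisors.card : ℝ) ≤ 2 * (g.divisors.card : ℝ) := by
    rw [mul_comm (2 : ℝ)]; exact_mod_cast hcard
  gcongr

/-- The complementary divisors `m / (1 + jA)` already account for `m^s ∑ 1/(1+jA)`,
because `(1 + jA)^s ≤ 1 + jA`. -/
lemma le_sigmaR {s : ℝ} (hs1 : s ≤ 1) {A m J : ℕ} (hA : 0 < A) (hm : 0 < m)
    (h : ∀ j < J, (1 + j * A) ∣ m) :
    (m : ℝ) ^ s * ∑ j ∈ Finset.range J, 1 / (1 + j * A : ℝ) ≤ sigmaR s m := by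
  have hinj : Set.InjOn (fun j => m / (1 + j * A)) (Finset.range J : Set ℕ) := by
    intro i hi j hj hij
    simp only [Finset.coe_range, Set.mem_Iio] at hi hj
    obtain ⟨x, hx⟩ := h i hi
    obtain ⟨y, hy⟩ := h j hj
    have e1 : m / (1 + i * A) = x := by rw [hx]; exact Nat.mul_div_cancel_left _ (by positivity)
    have e2 : m / (1 + j * A) = y := by rw [hy]; exact Nat.mul_div_cancel_left _ (by positivity)
    have hxy : x = y := by rw [← e1, ← e2]; exact hij
    subst hxy
    have hx0 : 0 < x := Nat.pos_of_ne_zero (by rintro rfl; omega)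
    have := Nat.eq_of_mul_eq_mul_right hx0 (hx.symm.trans hy)
    exact Nat.eq_of_mul_eq_mul_right hA (by omega)
  have hsub : (Finset.range J).image (fun j => m / (1 + j * A)) ⊆ m.divisors := by
    intro e he
    obtain ⟨j, hj, rfl⟩ := Finset.mem_image.1 he
    exact Nat.mem_divisors.2 ⟨Nat.div_dvd_of_dvd (h j (Finset.mem_range.1 hj)), hm.ne'⟩
  have h1 : ∑ j ∈ Finset.range J, ((m / (1 + j * A) : ℕ) : ℝ) ^ s ≤ sigmaR s m := by
    rw [← Finset.sum_image (f := fun e : ℕ => (e : ℝ) ^ s) hinj]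
    exact Finset.sum_le_sum_of_subset_of_nonneg hsub fun _ _ _ => by positivity
  refine le_trans ?_ h1
  rw [Finset.mul_sum]
  refine Finset.sum_le_sum fun j hj => ?_
  have hq : (1 : ℝ) ≤ 1 + j * A := by
    have : (0 : ℝ) ≤ j * A := by positivity
    linarith
  have hcast : ((m / (1 + j * A) : ℕ) : ℝ) = m / (1 + j * A) := by
    rw [Nat.cast_div (h j (Finset.mem_range.1 hj)) (by positivity)]
    push_cast; rfl
  rw [hcast, Real.div_rpow (by positivity) (by positivity), mul_one_div]
  have : (1 + j * A : ℝ) ^ s ≤ 1 + j * A := by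
    simpa using Real.rpow_le_rpow_of_exponent_le hq hs1
  gcongr

lemma exists_large_sum (A : ℕ) (M : ℝ) :
    ∃ J : ℕ, M ≤ ∑ j ∈ Finset.range J, 1 / (1 + j * A : ℝ) := by
  obtain ⟨J, hJ⟩ := (Real.tendsto_sum_range_one_div_nat_succ_atTop.eventually_ge_atTop
    (M * (A + 1))).exists
  refine ⟨J, ?_⟩
  have hA : (0 : ℝ) < A + 1 := by positivity
  rw [← le_div_iff₀ hA, Finset.sum_div] at hJ
  refine hJ.trans (Finset.sum_le_sum fun j _ => ?_)
  rw [div_div]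
  have : (1 + j * A : ℝ) ≤ (j + 1) * (A + 1) := by
    nlinarith [(Nat.cast_nonneg j : (0:ℝ) ≤ j), (Nat.cast_nonneg A : (0:ℝ) ≤ A)]
  gcongr

/-- Dirichlet's theorem applied to `(cn + d)/gcd(c, d)` along a residue class modulo `Q` on which
`Q ∣ an + b`. -/
lemma exists_prime_form (a b c d : ℕ) (hc : 0 < c) (Q : ℕ) (hQ : 0 < Q)
    (hQa : Q.Coprime a) (hQD : IsCoprime (Q : ℤ) (a * d - b * c)) (N : ℕ) :
    ∃ n ≥ N, ∃ p : ℕ, p.Prime ∧ Q ∣ a * n + b ∧ c * n + d = c.gcd d * p := by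
  have : NeZero Q := ⟨hQ.ne'⟩
  obtain ⟨r, hr⟩ : ∃ r : ℕ, Q ∣ a * r + b := by
    refine ⟨(-(b : ZMod Q) * (a : ZMod Q)⁻¹).val, ?_⟩
    rw [← ZMod.natCast_eq_zero_iff]
    push_cast
    rw [ZMod.natCast_val, ZMod.cast_id]
    have := ZMod.coe_mul_inv_eq_one a hQa.symm
    linear_combination (-(b : ZMod Q)) * this
  set g := c.gcd d with hg
  have hg0 : 0 < g := Nat.gcd_pos_of_pos_left _ hc
  obtain ⟨c', d', hcd, hc', hd'⟩ := Nat.exists_coprime c d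
  rw [← hg] at hc' hd'
  have hc'0 : 0 < c' := Nat.pos_of_ne_zero (by rintro rfl; simp at hc'; omega)
  have hu1 : (c' * r + d').Coprime c' := by
    rw [add_comm]
    simpa using hcd.symm
  have hu2 : (c' * r + d').Coprime Q := by
    obtain ⟨k, hk⟩ := hr
    rw [← Nat.isCoprime_iff_coprime]
    obtain ⟨x, y, hxy⟩ := hQD
    -- `ad - bc = a (cr + d) - c (ar + b)`, with `cr + d = g (c' r + d')` and `ar + b = Qk`.
    have hk' : (a : ℤ) * r + b = Q * k := by exact_mod_cast hk
    have hcz : (c : ℤ) = c' * g := by exact_mod_cast hc'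
    have hdz : (d : ℤ) = d' * g := by exact_mod_cast hd'
    refine ⟨y * a * g, x - y * c * k, ?_⟩
    push_cast
    rw [← hxy]
    rw [hdz, hcz]
    linear_combination (y * c' * g) * hk'
  have hu : (c' * r + d').Coprime (c' * Q) := hu1.mul_right hu2
  have : NeZero (c' * Q) := ⟨by positivity⟩
  obtain ⟨p, hp, hpp, hmod⟩ := Nat.forall_exists_prime_gt_and_eq_mod
    ((ZMod.isUnit_iff_coprime _ _).2 hu) (c' * r + d' + (c' * N + d'))
  rw [ZMod.natCast_eq_natCast_iff] at hmod
  obtain ⟨k, hk⟩ := (Nat.modEq_iff_dvd' (by omega : c' * r + d' ≤ p)).1 hmod.symm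
  have hpk : p = c' * (r + Q * k) + d' := by
    have : p = c' * Q * k + (c' * r + d') := by omega
    rw [this]; ring
  refine ⟨r + Q * k, ?_, p, hpp, ?_, ?_⟩
  · have : c' * N < c' * (r + Q * k) := by omega
    exact (lt_of_mul_lt_mul_left this (Nat.zero_le _)).le
  · have : a * (r + Q * k) + b = (a * r + b) + Q * (a * k) := by ring
    rw [this]
    exact dvd_add hr (dvd_mul_right _ _)
  · rw [hpk, hc', hd']; ring

lemma exists_large_ratio (a b c d : ℕ) (ha : 0 < a) (hc : 0 < c) (habcd : a * d ≠ b * c)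
    (s : ℝ) (hs0 : 0 ≤ s) (hs1 : s ≤ 1) (M : ℝ) (hM : 0 ≤ M) (N : ℕ) :
    ∃ n ≥ N, 0 < a * n + b ∧ 0 < c * n + d ∧
      M * sigmaR s (c * n + d) ≤ sigmaR s (a * n + b) := by
  set D : ℤ := a * d - b * c with hD
  have hD0 : D ≠ 0 := by
    rw [hD, sub_ne_zero]; exact_mod_cast habcd
  set A := a * c * D.natAbs with hAdef
  have hA : 0 < A := by have := Int.natAbs_pos.2 hD0; positivity
  set g := c.gcd d with hg
  -- The factor `c + d` pays for `cn + d ≤ (c + d)(an + b)`, and `2 τ(g)` for `σ_s(gp)`.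
  obtain ⟨J, hJ⟩ := exists_large_sum A (M * (2 * g.divisors.card * (c + d)))
  set Q := ∏ j ∈ Finset.range J, (1 + j * A) with hQ
  have hQ0 : 0 < Q := Finset.prod_pos fun j _ => by positivity
  have hQA : Q.Coprime A := Nat.Coprime.prod_left fun j _ => by simp
  have hQa : Q.Coprime a :=
    hQA.coprime_dvd_right ⟨c * D.natAbs, by rw [hAdef]; ring⟩
  have hQD : IsCoprime (Q : ℤ) D := by
    have : Q.Coprime D.natAbs := hQA.coprime_dvd_right (dvd_mul_left _ _)
    rw [Int.isCoprime_iff_gcd_eq_one, Int.gcd_def]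
    simpa using this
  obtain ⟨n, hn, p, hp, hdvd, heq⟩ := exists_prime_form a b c d hc Q hQ0 hQa hQD (N + 1)
  have hn1 : 1 ≤ n := by omega
  have hm : 0 < a * n + b := by positivity
  refine ⟨n, by omega, hm, by positivity, ?_⟩
  have hup := sigmaR_mul_prime_le hs0 g p hp
  rw [← heq] at hup
  have hlow := le_sigmaR hs1 (J := J) hA hm fun j hj =>
    (Finset.dvd_prod_of_mem (fun j => 1 + j * A) (Finset.mem_range.2 hj)).trans hdvd
  have hcomp : ((c * n + d : ℕ) : ℝ) ^ s ≤ (c + d) * ((a * n + b : ℕ) : ℝ) ^ s := by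
    have h1 : c * n + d ≤ (c + d) * (a * n + b) := by
      have h2 : n ≤ a * n + b := by nlinarith
      calc c * n + d ≤ (c + d) * n := by nlinarith
        _ ≤ _ := Nat.mul_le_mul_left _ h2
    have h3 : ((c * n + d : ℕ) : ℝ) ≤ ((c : ℝ) + d) * ((a * n + b : ℕ) : ℝ) := by
      exact_mod_cast h1
    have h4 : (1 : ℝ) ≤ (c : ℝ) + d := by exact_mod_cast (by omega : 1 ≤ c + d)
    calc ((c * n + d : ℕ) : ℝ) ^ s ≤ (((c : ℝ) + d) * ((a * n + b : ℕ) : ℝ)) ^ s :=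
          Real.rpow_le_rpow (by positivity) h3 hs0
      _ = ((c : ℝ) + d) ^ s * ((a * n + b : ℕ) : ℝ) ^ s :=
          Real.mul_rpow (by positivity) (by positivity)
      _ ≤ _ := by
          have : ((c : ℝ) + d) ^ s ≤ (c : ℝ) + d := by
            simpa using Real.rpow_le_rpow_of_exponent_le h4 hs1
          gcongr
  calc M * sigmaR s (c * n + d)
      ≤ M * (2 * g.divisors.card * ((c + d) * ((a * n + b : ℕ) : ℝ) ^ s)) := by
        refine mul_le_mul_of_nonneg_left (hup.trans ?_) hM
        gcongr
    _ = ((a * n + b : ℕ) : ℝ) ^ s * (M * (2 * g.divisors.card * (c + d))) := by ring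
    _ ≤ _ := mul_le_mul_of_nonneg_left hJ (by positivity)
    _ ≤ _ := hlow

theorem stmt_6 (a b c d : ℕ) (ha : 0 < a) (hc : 0 < c) (habcd : a * d ≠ b * c)
    (s : ℝ) (hs0 : 0 ≤ s) (hs1 : s ≤ 1) :
    Filter.liminf
        (fun n : ℕ => ((sigmaR s (a * n + b) / sigmaR s (c * n + d) : ℝ) : EReal))
        Filter.atTop = 0 ∧
    Filter.limsup
        (fun n : ℕ => ((sigmaR s (a * n + b) / sigmaR s (c * n + d) : ℝ) : EReal))
        Filter.atTop = ⊤ := by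
  constructor
  · apply le_antisymm
    · refine EReal.le_of_forall_lt_iff_le.1 fun ε hε => ?_
      have hε' : 0 < ε := by exact_mod_cast hε
      refine Filter.liminf_le_of_frequently_le' (Filter.frequently_atTop.2 fun N => ?_)
      obtain ⟨n, hn, h1, h2, h⟩ := exists_large_ratio c d a b hc ha
        (fun h => habcd (by rw [mul_comm b c, h, mul_comm])) s hs0 hs1 ε⁻¹ (by positivity) N
      refine ⟨n, hn, ?_⟩
      rw [EReal.coe_le_coe_iff, div_le_iff₀ (sigmaR_pos s h1)]
      rwa [inv_mul_le_iff₀ hε'] at h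
    · refine Filter.le_liminf_of_le (by isBoundedDefault) (Filter.Eventually.of_forall fun n => ?_)
      have h0 : ∀ k, 0 ≤ sigmaR s k := fun k => Finset.sum_nonneg fun _ _ => by positivity
      exact_mod_cast div_nonneg (h0 _) (h0 _)
  · refine EReal.eq_top_iff_forall_lt _ |>.2 fun M => ?_
    refine lt_of_lt_of_le (b := ((|M| + 1 : ℝ) : EReal)) ?_ ?_
    · exact_mod_cast (le_abs_self M).trans_lt (lt_add_one _)
    refine Filter.le_limsup_of_frequently_le' (Filter.frequently_atTop.2 fun N => ?_)
    obtain ⟨n, hn, h1, h2, h⟩ := exists_large_ratio a b c d ha hc habcd s hs0 hs1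
      (|M| + 1) (by positivity) N
    refine ⟨n, hn, ?_⟩
    rwa [EReal.coe_le_coe_iff, le_div_iff₀ (sigmaR_pos s h2)]
end

section
/- Let a and c be positive integers with a < c, and let b, d be nonnegative integers. Then there exist a positive integer N and a real number s₀ > 1 such that σ_s(an+b) < σ_s(cn+d) for all real s ≥ s₀ and all integers n ≥ N. -/
theorem sigmaR_le (s : ℝ) (hs : 2 ≤ s) (m : ℕ) :
    sigmaR s m ≤ (∑' k : ℕ, 1 / (k : ℝ) ^ 2) * (m : ℝ) ^ s := by
  have hsum : Summable (fun k : ℕ => 1 / (k : ℝ) ^ 2) :=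
    Real.summable_one_div_nat_pow.mpr (by norm_num)
  unfold sigmaR
  rw [← Nat.sum_div_divisors m (fun k => (k : ℝ) ^ s)]
  calc ∑ k ∈ m.divisors, ((m / k : ℕ) : ℝ) ^ s
      ≤ ∑ k ∈ m.divisors, 1 / (k : ℝ) ^ 2 * (m : ℝ) ^ s := by
        refine Finset.sum_le_sum fun k hk => ?_
        have hk0 : 0 < k := Nat.pos_of_mem_divisors hk
        have hk1 : (1 : ℝ) ≤ k := by exact_mod_cast hk0
        rw [Nat.cast_div (Nat.dvd_of_mem_divisors hk) (by positivity),
          Real.div_rpow (by positivity) (by positivity), one_div_mul_eq_div]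
        gcongr
        rw [← Real.rpow_natCast]
        exact Real.rpow_le_rpow_of_exponent_le hk1 (by exact_mod_cast hs)
    _ = (∑ k ∈ m.divisors, 1 / (k : ℝ) ^ 2) * (m : ℝ) ^ s := by rw [Finset.sum_mul]
    _ ≤ _ := by
        gcongr
        exact hsum.sum_le_tsum _ fun k _ => by positivity

theorem le_sigmaR_s11 (s : ℝ) (m : ℕ) (hm : m ≠ 0) : (m : ℝ) ^ s ≤ sigmaR s m :=
  Finset.single_le_sum (f := fun k : ℕ => (k : ℝ) ^ s) (fun k _ => by positivity)
    (Nat.mem_divisors_self m hm)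

theorem stmt_11 (a c : ℕ) (ha : 0 < a) (hc : 0 < c) (hac : a < c) (b d : ℕ) :
    ∃ N : ℕ, 0 < N ∧ ∃ s₀ : ℝ, 1 < s₀ ∧
      ∀ s : ℝ, s₀ ≤ s → ∀ n : ℕ, N ≤ n →
        sigmaR s (a * n + b) < sigmaR s (c * n + d) := by
  set K : ℝ := ∑' k : ℕ, 1 / (k : ℝ) ^ 2
  set r : ℝ := 2 * c / (2 * a + 1) with hr
  have hr1 : 1 < r := by
    rw [hr, one_lt_div (by positivity)]
    have : (a : ℝ) + 1 ≤ c := by exact_mod_cast hac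
    linarith
  obtain ⟨k, hk⟩ := pow_unbounded_of_one_lt K hr1
  refine ⟨2 * b + 1, by omega, max 2 k, lt_max_of_lt_left one_lt_two, fun s hs n hn => ?_⟩
  have hs2 : 2 ≤ s := (le_max_left _ _).trans hs
  have hsk : (k : ℝ) ≤ s := (le_max_right _ _).trans hs
  have hKr : K < r ^ s := by
    refine hk.trans_le ?_
    rw [← Real.rpow_natCast]
    exact Real.rpow_le_rpow_of_exponent_le hr1.le hsk
  have hn0 : 0 < n := by omega
  have hm : (0 : ℝ) < ((a * n + b : ℕ) : ℝ) := by
    have : 0 < a * n + b := by positivity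
    exact_mod_cast this
  have hrm : r * ((a * n + b : ℕ) : ℝ) ≤ ((c * n + d : ℕ) : ℝ) := by
    rw [hr, div_mul_eq_mul_div, div_le_iff₀ (by positivity)]
    have hcn : c * (2 * b) ≤ c * n := Nat.mul_le_mul_left c (by omega)
    have : 2 * c * (a * n + b) ≤ (c * n + d) * (2 * a + 1) := by nlinarith
    exact_mod_cast this
  calc sigmaR s (a * n + b) ≤ K * ((a * n + b : ℕ) : ℝ) ^ s := sigmaR_le s hs2 _
    _ < r ^ s * ((a * n + b : ℕ) : ℝ) ^ s := by gcongr
    _ = (r * ((a * n + b : ℕ) : ℝ)) ^ s := (Real.mul_rpow (by positivity) hm.le).symm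
    _ ≤ ((c * n + d : ℕ) : ℝ) ^ s := by gcongr
    _ ≤ sigmaR s (c * n + d) := le_sigmaR_s11 s _ (by positivity)
end
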